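/- Let δ ≥ 7 be an integer, let 𝐮 be the standard sequence over {a, b} whose slope has continued fraction expansion θ = [0, 1, ⌊δ/2⌋, 1, 1, 1, …] (partial quotients a₁ = 1, a₂ = ⌊δ/2⌋, and aₙ = 1 for all n ≥ 3), and let 𝐱_{2δ} = colour(𝐮, (12⋯δ)^ω, (1′2′⋯δ′)^ω). Then 𝐱_{2δ} is a balanced sequence over an alphabet of 2δ letters whose critical exponent equals E(𝐱_{2δ}) = (2δ−1)/(2δ−2). -/

import Mathlib

open Filter
open scoped ENNReal

namespace BalancedCE

variable {α : Type*} {β : Type*}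

/-- The factor of `v` of length `n` starting at position `i`. -/
def factorAt (v : ℕ → α) (i n : ℕ) : List α := (List.range n).map fun k => v (i + k)

/-- `u` is a factor of the sequence `v`. -/
def IsFactor (v : ℕ → α) (u : List α) : Prop := ∃ i, factorAt v i u.length = u

/-- The word `w` occurs in the sequence `v` at position `i`. -/
def OccursAt (v : ℕ → α) (w : List α) (i : ℕ) : Prop := factorAt v i w.length = w

/-- A sequence is balanced if counts of each letter in equal-length factors differ by at most 1. -/
def Balanced [DecidableEq α] (v : ℕ → α) : Prop :=
  ∀ (a : α) (u w : List α), IsFactor v u → IsFactor v w → u.length = w.length →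
    |(u.count a : ℤ) - (w.count a : ℤ)| ≤ 1

def EventuallyPeriodic (v : ℕ → α) : Prop :=
  ∃ p, 0 < p ∧ ∃ N, ∀ n, N ≤ n → v (n + p) = v n

def Recurrent (v : ℕ → α) : Prop :=
  ∀ u : List α, IsFactor v u → ∀ N : ℕ, ∃ i, N ≤ i ∧ OccursAt v u i

/-- `i < j` are consecutive occurrences of the letter `a` in `v`. -/
def ConsecOcc (v : ℕ → α) (a : α) (i j : ℕ) : Prop :=
  i < j ∧ v i = a ∧ v j = a ∧ ∀ k, i < k → k < j → v k ≠ a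

/-- `p` is a period of the finite word `z` (i.e. `z` is a prefix of `u^ω` with `|u| = p`). -/
def IsPeriod (z : List α) (p : ℕ) : Prop :=
  0 < p ∧ ∀ i, i + p < z.length → z[i]? = z[i + p]?

/-- The minimal period of a finite word. -/
noncomputable def minPeriod (z : List α) : ℕ := sInf {p | IsPeriod z p}

/-- The exponent of a finite word: its length divided by its minimal period. -/
noncomputable def expE (z : List α) : ℝ≥0∞ := (z.length : ℝ≥0∞) / (minPeriod z : ℝ≥0∞)

/-- The critical exponent of a sequence: the supremum of exponents of nonempty factors. -/
noncomputable def criticalExponent (v : ℕ → α) : ℝ≥0∞ :=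
  ⨆ (z : List α) (_ : IsFactor v z ∧ z ≠ []), expE z

/-- A Pansiot sequence over a `d`-letter alphabet. -/
def Pansiot (d : ℕ) (v : ℕ → α) : Prop :=
  (∀ i : ℕ, (factorAt v i (d - 1)).Nodup) ∧
  ∀ (a : α) (i j : ℕ), ConsecOcc v a i j → v (i + 1) ≠ v (j + 1)

/-- The letter `a` has frequency `ρ` in the sequence `v`. -/
def HasFreq [DecidableEq α] (v : ℕ → α) (a : α) (ρ : ℝ) : Prop :=
  Tendsto (fun n => ((factorAt v 0 n).count a : ℝ) / n) atTop (nhds ρ)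

/-- Factor complexity of a sequence. -/
noncomputable def complexity (v : ℕ → α) (n : ℕ) : ℕ :=
  Set.ncard {u : List α | IsFactor v u ∧ u.length = n}

/-- Sturmian sequences: aperiodic binary sequences of factor complexity `n + 1`.
Convention: the letter `a` is `false`, the letter `b` is `true`. -/
def Sturmian (u : ℕ → Bool) : Prop :=
  ¬ EventuallyPeriodic u ∧ ∀ n, complexity u n = n + 1

/-- Prepending a letter to a sequence. -/
def consSeq (c : α) (v : ℕ → α) : ℕ → α := fun n =>
  match n with
  | 0 => c
  | Nat.succ m => v m

/-- A standard sequence: a Sturmian sequence `u` such that `a·u` and `b·u` are Sturmian. -/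
def IsStandard (u : ℕ → Bool) : Prop :=
  Sturmian u ∧ Sturmian (consSeq false u) ∧ Sturmian (consSeq true u)

/-- The slope of a binary sequence, with the convention `ρ_b > ρ_a` (`a = false`, `b = true`). -/
def HasSlope (u : ℕ → Bool) (θ : ℝ) : Prop :=
  ∃ ρa ρb : ℝ, HasFreq u false ρa ∧ HasFreq u true ρb ∧ ρa < ρb ∧ θ = ρa / ρb

/-- `θ` has the (infinite) continued fraction expansion `[0; a 1, a 2, a 3, …]`:
there are complete quotients' fractional parts `t n ∈ (0,1)` with `t 0 = θ` and
`1 / t n = a (n+1) + t (n+1)` for all `n`. (The value `a 0` is irrelevant.) -/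
def HasCF (θ : ℝ) (a : ℕ → ℕ) : Prop :=
  ∃ t : ℕ → ℝ, t 0 = θ ∧ ∀ n, 0 < t n ∧ t n < 1 ∧ 1 / t n = (a (n + 1) : ℝ) + t (n + 1)

/-- Number of positions `< n` where `u` takes the value `c`. -/
def countBefore (u : ℕ → Bool) (c : Bool) (n : ℕ) : ℕ :=
  ((List.range n).filter fun i => u i = c).length

/-- The colouring of a binary sequence `u` by `y` (on the `a = false` positions)
and `y'` (on the `b = true` positions). -/
def colour (u : ℕ → Bool) (y : ℕ → α) (y' : ℕ → β) : ℕ → α ⊕ β := fun n =>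
  if u n = false then Sum.inl (y (countBefore u false n))
  else Sum.inr (y' (countBefore u true n))

/-- A constant gap sequence: periodic, and consecutive occurrences of each occurring
letter are at a constant distance. -/
def ConstantGap (y : ℕ → α) : Prop :=
  (∃ p, 0 < p ∧ ∀ n, y (n + p) = y n) ∧
  ∀ c : α, (∃ i, y i = c) → ∃ g, 0 < g ∧ ∀ i j, ConsecOcc y c i j → j - i = g

/-- The discolouration (projection) map: letters of the first alphabet go to `a = false`,
letters of the second alphabet go to `b = true`. -/
def proj : α ⊕ β → Bool := Sum.elim (fun _ => false) (fun _ => true)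

/-- `v` is a return word to `w` in the sequence `z`. -/
def IsReturnWord (z : ℕ → α) (w v : List α) : Prop :=
  ∃ i j : ℕ, i < j ∧ OccursAt z w i ∧ OccursAt z w j ∧
    (∀ k, i < k → k < j → ¬ OccursAt z w k) ∧ v = factorAt z i (j - i)

def RightSpecial (z : ℕ → α) (w : List α) : Prop :=
  ∃ a b : α, a ≠ b ∧ IsFactor z (w ++ [a]) ∧ IsFactor z (w ++ [b])

def LeftSpecial (z : ℕ → α) (w : List α) : Prop :=
  ∃ a b : α, a ≠ b ∧ IsFactor z (a :: w) ∧ IsFactor z (b :: w)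

def Bispecial (z : ℕ → α) (w : List α) : Prop := LeftSpecial z w ∧ RightSpecial z w

/-- `o` enumerates, in increasing order, all occurrences of `w` in `z`. -/
def IsOccEnum (z : ℕ → α) (w : List α) (o : ℕ → ℕ) : Prop :=
  StrictMono o ∧ (∀ n, OccursAt z w (o n)) ∧ ∀ i, OccursAt z w i → ∃ n, o n = i

/-- The derived sequence of `z` with respect to the occurrence enumeration `o` of a factor:
its `n`-th letter is the return word between the `n`-th and `(n+1)`-st occurrences. -/
def derivedSeq (z : ℕ → α) (o : ℕ → ℕ) : ℕ → List α :=
  fun n => factorAt z (o n) (o (n + 1) - o n)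

/-- The slope of a sequence over a two-letter alphabet:
the ratio of the smaller letter frequency to the larger one. -/
def HasSlope2 {γ : Type*} [DecidableEq γ] (z : ℕ → γ) (θ : ℝ) : Prop :=
  ∃ (c c' : γ) (ρ ρ' : ℝ), c ≠ c' ∧ (∀ n, z n = c ∨ z n = c') ∧
    HasFreq z c ρ ∧ HasFreq z c' ρ' ∧ ρ < ρ' ∧ θ = ρ / ρ'

/-- The purely cyclic constant gap sequence `(0 1 ⋯ (δ-1))^ω` over `ZMod δ`. -/
def cyc (δ : ℕ) : ℕ → ZMod δ := fun n => (n : ZMod δ)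

/-- The colouring `colour(u, (1 2 ⋯ δ)^ω, (1' 2' ⋯ δ')^ω)` over `2δ` letters. -/
def colourCyc (δ : ℕ) (u : ℕ → Bool) : ℕ → ZMod δ ⊕ ZMod δ := colour u (cyc δ) (cyc δ)

section Sturm

variable {γ : Type*}

lemma factorAt_length (v : ℕ → γ) (i n : ℕ) : (factorAt v i n).length = n := by
  simp [factorAt]

lemma factorAt_eq_iff (v w : ℕ → γ) (i j n : ℕ) :
    factorAt v i n = factorAt w j n ↔ ∀ k, k < n → v (i + k) = w (j + k) := by
  simp [factorAt]

lemma factorAt_succ (v : ℕ → γ) (i n : ℕ) :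
    factorAt v i (n + 1) = factorAt v i n ++ [v (i + n)] := by
  simp [factorAt, List.range_succ]

lemma isFactor_factorAt (v : ℕ → γ) (i n : ℕ) : IsFactor v (factorAt v i n) :=
  ⟨i, by rw [factorAt_length]⟩

/-- Factors of length `n` that can be followed by the letter `c`. -/
def extSet (v : ℕ → Bool) (n : ℕ) (c : Bool) : Set (List Bool) :=
  {z | ∃ i, factorAt v i n = z ∧ v (i + n) = c}

lemma facSet_eq (v : ℕ → Bool) (n : ℕ) :
    {u : List Bool | IsFactor v u ∧ u.length = n} = extSet v n true ∪ extSet v n false := by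
  ext z
  simp only [Set.mem_ofPred_eq, extSet, Set.mem_union]
  constructor
  · rintro ⟨⟨i, hi⟩, rfl⟩
    cases h : v (i + z.length)
    · exact Or.inr ⟨i, hi, h⟩
    · exact Or.inl ⟨i, hi, h⟩
  · rintro (⟨i, rfl, -⟩ | ⟨i, rfl, -⟩) <;>
    exact ⟨isFactor_factorAt v i n, factorAt_length v i n⟩

lemma facSet_succ_eq (v : ℕ → Bool) (n : ℕ) :
    {u : List Bool | IsFactor v u ∧ u.length = n + 1} =
      (fun z => z ++ [true]) '' extSet v n true ∪ (fun z => z ++ [false]) '' extSet v n false := by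
  ext z
  simp only [Set.mem_ofPred_eq, extSet, Set.mem_union, Set.mem_image]
  constructor
  · rintro ⟨⟨i, hi⟩, hl⟩
    rw [hl, factorAt_succ] at hi
    cases h : v (i + n)
    · exact Or.inr ⟨_, ⟨i, rfl, h⟩, by rw [← hi, h]⟩
    · exact Or.inl ⟨_, ⟨i, rfl, h⟩, by rw [← hi, h]⟩
  · rintro (⟨_, ⟨i, rfl, h⟩, rfl⟩ | ⟨_, ⟨i, rfl, h⟩, rfl⟩) <;>
    · rw [← h, ← factorAt_succ]
      exact ⟨isFactor_factorAt v i _, factorAt_length v i _⟩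

lemma rs_unique (v : ℕ → Bool) (hc : ∀ n, complexity v n = n + 1) (n : ℕ)
    (z z' : List Bool) (hz : z ∈ extSet v n true ∩ extSet v n false)
    (hz' : z' ∈ extSet v n true ∩ extSet v n false) : z = z' := by
  have h1 := hc n
  have h2 := hc (n + 1)
  unfold complexity at h1 h2
  rw [facSet_eq] at h1
  rw [facSet_succ_eq] at h2
  have hfin : (extSet v n true ∪ extSet v n false).Finite :=
    Set.finite_of_ncard_ne_zero (by omega)
  have hf1 : (extSet v n true).Finite := hfin.subset Set.subset_union_left
  have hf2 : (extSet v n false).Finite := hfin.subset Set.subset_union_right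
  have inj : ∀ c : Bool, Function.Injective (fun z : List Bool => z ++ [c]) := by
    intro c x y h
    simpa using h
  rw [Set.ncard_union_eq _ (hf1.image _) (hf2.image _), Set.ncard_image_of_injective _ (inj _),
    Set.ncard_image_of_injective _ (inj _)] at h2
  · have h3 := Set.ncard_union_add_ncard_inter (extSet v n true) (extSet v n false) hf1 hf2
    have h4 : (extSet v n true ∩ extSet v n false).ncard = 1 := by omega
    obtain ⟨a, ha⟩ := Set.ncard_eq_one.mp h4
    rw [ha] at hz hz'
    simp at hz hz'
    rw [hz, hz']
  · rw [Set.disjoint_left]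
    rintro _ ⟨x, _, rfl⟩ ⟨y, _, h⟩
    simp at h

/-- The key periodicity argument. -/
lemma periodic_of_config (v : ℕ → Bool) (hc : ∀ n, complexity v n = n + 1) (c : Bool)
    (m i j : ℕ) (hi0 : v i = c) (hi1 : v (i + m + 1) = c)
    (hj0 : v j = !c) (hj1 : v (j + m + 1) = !c)
    (hw : ∀ t, t < m → v (i + 1 + t) = v (j + 1 + t))
    (hpal : ∀ t, t < m → v (i + 1 + t) = v (i + 1 + (m - 1 - t)))
    (hns : factorAt v i (m + 1) ∉ extSet v (m + 1) true ∩ extSet v (m + 1) false) :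
    EventuallyPeriodic v := by
  -- the window `(!c) w` does not occur
  have hno : ∀ l, l ≤ m + 1 → factorAt v (i + l) (m + 1) ≠ factorAt v j (m + 1) := by
    intro l hl h
    rw [factorAt_eq_iff] at h
    have h0 := h 0 (by omega)
    simp only [Nat.add_zero] at h0
    rw [hj0] at h0
    rcases Nat.eq_zero_or_pos l with rfl | hl0
    · simp [hi0] at h0
    rcases Nat.eq_or_lt_of_le hl with rfl | hl1
    · rw [← add_assoc, hi1] at h0; simp at h0
    have h1 := h (m + 1 - l) (by omega)
    have e1 : i + l + (m + 1 - l) = i + m + 1 := by omega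
    rw [e1, hi1] at h1
    have h2 := hw (m - l) (by omega)
    have e2 : j + 1 + (m - l) = j + (m + 1 - l) := by omega
    rw [e2, ← h1] at h2
    have h3 := hpal (m - l) (by omega)
    have e3 : i + 1 + (m - 1 - (m - l)) = i + l := by omega
    rw [e3, h2, h0] at h3
    simp at h3
  -- determinism
  have hdet : ∀ x y, factorAt v x (m + 1) = factorAt v y (m + 1) →
      factorAt v x (m + 1) ≠ factorAt v j (m + 1) → v (x + (m + 1)) = v (y + (m + 1)) := by
    intro x y hxy hne
    by_contra hcon
    have hrs : factorAt v x (m + 1) ∈ extSet v (m + 1) true ∩ extSet v (m + 1) false := by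
      cases hx : v (x + (m + 1)) <;> cases hy : v (y + (m + 1))
      · exact absurd (hx.trans hy.symm) hcon
      · exact ⟨⟨y, hxy.symm, hy⟩, ⟨x, rfl, hx⟩⟩
      · exact ⟨⟨x, rfl, hx⟩, ⟨y, hxy.symm, hy⟩⟩
      · exact absurd (hx.trans hy.symm) hcon
    have hsuf : factorAt v (x + 1) m ∈ extSet v m true ∩ extSet v m false := by
      have hk : ∀ d, factorAt v x (m + 1) ∈ extSet v (m + 1) d →
          factorAt v (x + 1) m ∈ extSet v m d := by
        rintro d ⟨s, hs, hs'⟩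
        rw [factorAt_eq_iff] at hs
        refine ⟨s + 1, ?_, by rw [← hs']; congr 1; omega⟩
        rw [factorAt_eq_iff]
        intro k hk
        have := hs (k + 1) (by omega)
        rw [show s + 1 + k = s + (k + 1) by omega, this]
        congr 1; omega
      exact ⟨hk _ hrs.1, hk _ hrs.2⟩
    have hwij : factorAt v (i + 1) m = factorAt v (j + 1) m := by
      rw [factorAt_eq_iff]; exact hw
    have hwrs : factorAt v (i + 1) m ∈ extSet v m true ∩ extSet v m false := by
      have e1 : v (i + 1 + m) = c := by rw [← hi1]; congr 1; omega
      have e2 : v (j + 1 + m) = !c := by rw [← hj1]; congr 1; omega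
      cases c
      · exact ⟨⟨j + 1, hwij.symm, e2⟩, ⟨i + 1, rfl, e1⟩⟩
      · exact ⟨⟨i + 1, rfl, e1⟩, ⟨j + 1, hwij.symm, e2⟩⟩
    have heq := rs_unique v hc m _ _ hsuf hwrs
    rw [factorAt_eq_iff] at heq
    have key : ∀ s, v x = v s → factorAt v (s + 1) m = factorAt v (i + 1) m →
        factorAt v x (m + 1) = factorAt v s (m + 1) := by
      intro s hs hs2
      rw [factorAt_eq_iff] at hs2 ⊢
      intro k hk
      rcases k with _ | k
      · simpa using hs
      · have h1 := heq k (by omega)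
        have h2 := hs2 k (by omega)
        rw [show x + (k + 1) = x + 1 + k by omega, show s + (k + 1) = s + 1 + k by omega, h1, h2]
    by_cases hxc : v x = c
    · exact hns (key i (by rw [hxc, hi0]) rfl ▸ hrs)
    · exact hne (key j (by rw [hj0]; cases c <;> simp_all) hwij.symm)
  -- pigeonhole
  have hcard := hc (m + 1)
  unfold complexity at hcard
  set F := {u : List Bool | IsFactor v u ∧ u.length = m + 1} with hF
  have hfin : F.Finite := Set.finite_of_ncard_ne_zero (by omega)
  have hjF : factorAt v j (m + 1) ∈ F := ⟨isFactor_factorAt _ _ _, factorAt_length _ _ _⟩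
  have hcard2 : (F \ {factorAt v j (m + 1)}).ncard = m + 1 := by
    rw [Set.ncard_sdiff_singleton_of_mem hjF]; omega
  have hfin2 : (F \ {factorAt v j (m + 1)}).Finite := hfin.subset Set.sdiff_subset
  have hpig : ∃ x ∈ Finset.range (m + 2), ∃ y ∈ Finset.range (m + 2), x ≠ y ∧
      factorAt v (i + x) (m + 1) = factorAt v (i + y) (m + 1) := by
    apply Finset.exists_ne_map_eq_of_card_lt_of_maps_to (t := hfin2.toFinset)
    · rw [← Set.ncard_eq_toFinset_card _ hfin2, hcard2]; simp
    · intro x hx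
      simp only [Finset.coe_range, Set.mem_Iio] at hx
      simp only [Set.Finite.coe_toFinset]
      refine ⟨⟨isFactor_factorAt _ _ _, factorAt_length _ _ _⟩, ?_⟩
      simp only [Set.mem_singleton_iff]
      exact hno x (by omega)
  have hpig2 : ∃ x y, x < y ∧ y ≤ m + 1 ∧
      factorAt v (i + x) (m + 1) = factorAt v (i + y) (m + 1) := by
    obtain ⟨x, hx, y, hy, hne, h⟩ := hpig
    simp only [Finset.mem_range] at hx hy
    rcases lt_or_gt_of_ne hne with h1 | h1
    · exact ⟨x, y, h1, by omega, h⟩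
    · exact ⟨y, x, h1, by omega, h.symm⟩
  obtain ⟨x, y, hxy, hy, h⟩ := hpig2
  have hmain : ∀ t, factorAt v (i + x + t) (m + 1) = factorAt v (i + y + t) (m + 1) ∧
      factorAt v (i + x + t) (m + 1) ≠ factorAt v j (m + 1) := by
    intro t
    induction t using Nat.strong_induction_on with
    | _ t ih =>
    constructor
    · rcases t with _ | t
      · simpa using h
      · obtain ⟨h1, h2⟩ := ih t (by omega)
        have h3 := hdet _ _ h1 h2
        rw [factorAt_eq_iff] at h1 ⊢
        intro k hk
        rcases Nat.lt_or_ge k m with hk' | hk'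
        · have := h1 (k + 1) (by omega)
          rw [show i + x + (t + 1) + k = i + x + t + (k + 1) by omega, this]
          congr 1; omega
        · have hkm : k = m := by omega
          subst hkm
          rw [show i + x + (t + 1) + k = i + x + t + (k + 1) by omega, h3]
          congr 1; omega
    · rcases Nat.lt_or_ge t (y - x) with ht | ht
      · rw [show i + x + t = i + (x + t) by omega]
        exact hno (x + t) (by omega)
      · obtain ⟨h1, h2⟩ := ih (t - (y - x)) (by omega)
        rw [show i + x + t = i + y + (t - (y - x)) by omega, ← h1]
        exact h2
  refine ⟨y - x, by omega, i + x, ?_⟩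
  intro n hn
  have := (hmain (n - (i + x))).1
  rw [factorAt_eq_iff] at this
  have := this 0 (by omega)
  rw [show i + x + (n - (i + x)) + 0 = n by omega,
    show i + y + (n - (i + x)) + 0 = n + (y - x) by omega] at this
  exact this.symm

/-- Number of `true`'s before `n`, as an integer. -/
def cT (v : ℕ → Bool) (n : ℕ) : ℤ := (countBefore v true n : ℤ)

lemma countBefore_succ (v : ℕ → Bool) (c : Bool) (n : ℕ) :
    countBefore v c (n + 1) = countBefore v c n + if v n = c then 1 else 0 := by
  unfold countBefore
  rw [List.range_succ, List.filter_append, List.length_append]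
  by_cases h : v n = c <;> simp [h]

lemma countBefore_zero (v : ℕ → Bool) (c : Bool) : countBefore v c 0 = 0 := by
  simp [countBefore]

lemma cT_succ (v : ℕ → Bool) (n : ℕ) : cT v (n + 1) = cT v n + if v n = true then 1 else 0 := by
  unfold cT
  rw [countBefore_succ]
  push_cast
  rfl

lemma balanced_of_sturmian (v : ℕ → Bool) (hs : Sturmian v) (i j n : ℕ) :
    cT v (i + n) - cT v i ≤ cT v (j + n) - cT v j + 1 := by
  obtain ⟨hap, hc⟩ := hs
  induction n using Nat.strong_induction_on generalizing i j with
  | _ n ih =>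
  by_contra hcon
  push Not at hcon
  -- values inside
  have hin : ∀ l, 0 < l → l < n → cT v (i + l) - cT v i = cT v (j + l) - cT v j + 1 := by
    intro l h0 h1
    have a1 := ih l h1 i j
    have a2 := ih (n - l) (by omega) (i + l) (j + l)
    rw [show i + l + (n - l) = i + n by omega, show j + l + (n - l) = j + n by omega] at a2
    omega
  have hn2 : 2 ≤ n := by
    rcases n with _ | _ | n
    · simp at hcon
    · exfalso
      rw [cT_succ, cT_succ] at hcon
      split_ifs at hcon <;> omega
    · omega
  obtain ⟨m, rfl⟩ : ∃ m, n = m + 2 := ⟨n - 2, by omega⟩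
  have h1 := hin 1 (by omega) (by omega)
  rw [cT_succ, cT_succ] at h1
  have hvi : v i = true := by
    by_contra h; simp only [h] at h1; split_ifs at h1 <;> simp_all
  have hvj : v j = false := by
    by_contra h; simp only [Bool.not_eq_false] at h; simp only [h, hvi] at h1; simp at h1
  have hlast := hin (m + 1) (by omega) (by omega)
  have e1 := cT_succ v (i + (m + 1))
  have e2 := cT_succ v (j + (m + 1))
  rw [show i + (m + 1) + 1 = i + (m + 2) by omega] at e1
  rw [show j + (m + 1) + 1 = j + (m + 2) by omega] at e2
  have hvi' : v (i + m + 1) = true := by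
    by_contra h
    rw [show i + m + 1 = i + (m + 1) by omega] at h
    rw [if_neg h] at e1
    split_ifs at e2 <;> omega
  have hvj' : v (j + m + 1) = false := by
    by_contra h
    simp only [Bool.not_eq_false] at h
    rw [show j + m + 1 = j + (m + 1) by omega] at h
    rw [if_pos h] at e2
    split_ifs at e1 <;> omega
  have hw : ∀ t, t < m → v (i + 1 + t) = v (j + 1 + t) := by
    intro t ht
    have b1 := hin (t + 1) (by omega) (by omega)
    have b2 := hin (t + 2) (by omega) (by omega)
    have c1 := cT_succ v (i + (t + 1))
    have c2 := cT_succ v (j + (t + 1))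
    rw [show i + (t + 1) + 1 = i + (t + 2) by omega] at c1
    rw [show j + (t + 1) + 1 = j + (t + 2) by omega] at c2
    rw [show i + 1 + t = i + (t + 1) by omega, show j + 1 + t = j + (t + 1) by omega]
    cases hx : v (i + (t + 1)) <;> cases hy : v (j + (t + 1)) <;> simp_all <;> omega
  -- prefix and suffix counts
  have hps : ∀ l, l ≤ m → cT v (i + 1 + l) - cT v (i + 1) =
      cT v (i + 1 + m) - cT v (i + 1 + (m - l)) := by
    intro l hl
    have a1 := ih (l + 1) (by omega) i (j + 1 + (m - l))
    have a2 := ih (l + 1) (by omega) (i + 1 + (m - l)) j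
    rw [show i + (l + 1) = i + 1 + l by omega,
      show j + 1 + (m - l) + (l + 1) = j + (m + 2) by omega] at a1
    rw [show j + (l + 1) = j + 1 + l by omega,
      show i + 1 + (m - l) + (l + 1) = i + (m + 2) by omega] at a2
    have d1 := cT_succ v i
    have d2 := cT_succ v j
    rw [hvi] at d1
    rw [hvj] at d2
    rw [show i + (m + 1) = i + m + 1 by omega, hvi'] at e1
    rw [show j + (m + 1) = j + m + 1 by omega, hvj'] at e2
    have f0 := hin (l + 1) (by omega) (by omega)
    have f1 := hin (m - l + 1) (by omega) (by omega)
    rw [show i + (l + 1) = i + 1 + l by omega, show j + (l + 1) = j + 1 + l by omega] at f0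
    rw [show i + (m - l + 1) = i + 1 + (m - l) by omega,
      show j + (m - l + 1) = j + 1 + (m - l) by omega] at f1
    rw [show i + (m + 1) = i + m + 1 by omega, show j + (m + 1) = j + m + 1 by omega] at hlast
    rw [show i + 1 + m = i + m + 1 by omega]
    simp only [if_true, Bool.false_eq_true, if_false] at d1 d2 e1 e2
    omega
  have hpal : ∀ t, t < m → v (i + 1 + t) = v (i + 1 + (m - 1 - t)) := by
    intro t ht
    have b1 := hps t (by omega)
    have b2 := hps (t + 1) (by omega)
    have c1 := cT_succ v (i + 1 + t)
    have c2 := cT_succ v (i + 1 + (m - 1 - t))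
    rw [show i + 1 + (m - 1 - t) + 1 = i + 1 + (m - t) by omega] at c2
    rw [show m - (t + 1) = m - 1 - t by omega, show i + 1 + (t + 1) = i + 1 + t + 1 by omega] at b2
    cases hx : v (i + 1 + t) <;> cases hy : v (i + 1 + (m - 1 - t)) <;> simp_all <;> omega
  by_cases hrs : factorAt v i (m + 1) ∈ extSet v (m + 1) true ∩ extSet v (m + 1) false
  · apply hap
    refine periodic_of_config v hc false m j i hvj hvj' hvi hvi' (fun t ht => (hw t ht).symm) ?_ ?_
    · intro t ht
      rw [← hw t ht, ← hw _ (by omega)]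
      exact hpal t ht
    · intro h
      have := rs_unique v hc _ _ _ hrs h
      rw [factorAt_eq_iff] at this
      have := this 0 (by omega)
      simp [hvi, hvj] at this
  · exact hap (periodic_of_config v hc true m i j hvi hvi' hvj hvj' hw hpal hrs)

end Sturm
section Arith

/-- Denominators of the convergents (from index 2 on). -/
def Sq (k : ℕ) : ℕ → ℕ
  | 0 => 2
  | 1 => 2 * k + 1
  | n + 2 => Sq k (n + 1) + Sq k n

lemma Sq_add_two (k n : ℕ) : Sq k (n + 2) = Sq k (n + 1) + Sq k n := rfl

lemma Sq_pos (k : ℕ) : ∀ n, 0 < Sq k n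
  | 0 => by simp [Sq]
  | 1 => by simp [Sq]
  | n + 2 => by have := Sq_pos k n; rw [Sq_add_two]; omega

lemma Sq_mono (k : ℕ) (hk : 1 ≤ k) (n : ℕ) : Sq k n < Sq k (n + 1) := by
  rcases n with _ | n
  · simp [Sq]; omega
  · rw [Sq_add_two]; have := Sq_pos k n; omega

lemma Sq_ge (k : ℕ) (hk : 1 ≤ k) (n : ℕ) : n < Sq k n := by
  induction n with
  | zero => simp [Sq]
  | succ n ih => have := Sq_mono k hk n; omega

/-- The frequency of `b`. -/
noncomputable def psi (k : ℕ) (τ : ℝ) : ℝ := (k + 1 + τ) / (2 * k + 1 + 2 * τ)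

variable {τ : ℝ} (h0 : 0 < τ) (h2 : τ ^ 2 = 1 - τ)

include h0 h2

lemma tau_bounds : (0.6180 : ℝ) < τ ∧ τ < 0.61804 := by
  constructor <;> nlinarith

lemma psi_expand (k : ℕ) (q t : ℤ) :
    (2 * k + 1 + 2 * τ) * (q * psi k τ - t) = ((q - t - k * (2 * t - q) : ℤ) : ℝ) -
      ((2 * t - q : ℤ) : ℝ) * τ := by
  have hD : (0 : ℝ) < 2 * k + 1 + 2 * τ := by positivity
  unfold psi
  field_simp
  push_cast
  ring

lemma decomp (k : ℕ) (q w m : ℤ) (hq : q = 2 * w + (2 * k + 1) * m) (n : ℕ) :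
    ∃ x y : ℤ, (w : ℝ) - m * τ = x * (-τ) ^ n + y * (-τ) ^ (n + 1) ∧
      q = x * Sq k n + y * Sq k (n + 1) := by
  induction n with
  | zero => exact ⟨w, m, by ring, by rw [hq]; simp [Sq]; ring⟩
  | succ n ih =>
    obtain ⟨x, y, h, h'⟩ := ih
    refine ⟨y - x, x, ?_, ?_⟩
    · rw [h]
      have e1 : (-τ) ^ (n + 1) = (-τ) ^ n * (-τ) := pow_succ _ _
      have e2 : (-τ) ^ (n + 1 + 1) = (-τ) ^ n * (1 - τ) := by rw [pow_succ, pow_succ, ← h2]; ring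
      rw [e1, e2]
      push_cast
      ring
    · rw [h', Sq_add_two]; push_cast; ring

lemma approx_lb (k : ℕ) (n : ℕ) (q t : ℤ) (hq0 : 0 < q) (hq : q < Sq k (n + 1)) :
    τ ^ n ≤ |(2 * k + 1 + 2 * τ) * (q * psi k τ - t)| := by
  rw [psi_expand h0 h2]
  obtain ⟨x, y, h, h'⟩ := decomp h0 h2 k q (q - t - k * (2 * t - q)) (2 * t - q) (by ring) n
  rw [h]
  have e : (x : ℝ) * (-τ) ^ n + y * (-τ) ^ (n + 1) = (-τ) ^ n * (x - y * τ) := by ring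
  rw [e, abs_mul, abs_pow, abs_neg, abs_of_pos h0]
  have hp : 0 < τ ^ n := pow_pos h0 n
  have hS : (0 : ℤ) < Sq k n := by exact_mod_cast Sq_pos k n
  have hS' : (0 : ℤ) < Sq k (n + 1) := by exact_mod_cast Sq_pos k (n + 1)
  suffices h : 1 ≤ |(x : ℝ) - y * τ| by nlinarith
  rw [le_abs]
  rcases lt_trichotomy y 0 with hy | hy | hy
  · left
    have hx : 1 ≤ x := by
      by_contra hx
      have : x ≤ 0 := by omega
      nlinarith
    have h1 : (1 : ℝ) ≤ x := by exact_mod_cast hx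
    have h3 : (y : ℝ) ≤ 0 := by exact_mod_cast hy.le
    nlinarith
  · left
    subst hy
    have hx : 1 ≤ x := by
      by_contra hx
      have : x ≤ 0 := by omega
      nlinarith
    have h1 : (1 : ℝ) ≤ x := by exact_mod_cast hx
    simpa using h1
  · right
    have hx : x ≤ -1 := by
      by_contra hx
      have h4 : 0 ≤ x := by omega
      have : (1 : ℤ) ≤ y := hy
      nlinarith
    have h1 : (x : ℝ) ≤ -1 := by exact_mod_cast hx
    have h3 : (0 : ℝ) ≤ y := by exact_mod_cast hy.le
    nlinarith

lemma psi_irr (k : ℕ) (hk : 1 ≤ k) (q t : ℤ) (hq0 : 0 < q) : (q : ℝ) * psi k τ ≠ t := by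
  intro h
  have h3 := Sq_ge k hk (q.toNat + 1)
  have := approx_lb h0 h2 k q.toNat q t hq0 (by omega)
  rw [h] at this
  have hp : 0 < τ ^ q.toNat := pow_pos h0 _
  simp at this
  linarith

omit h0 h2

/-- Every half-open interval of length `g` contains a point `-jψ mod 1` with `j ≤ r`. -/
def Gap (ψ g : ℝ) (r : ℕ) : Prop :=
  ∀ x : ℝ, ∃ j : ℕ, j ≤ r ∧ ∃ n : ℤ, x + j * ψ < n ∧ (n : ℝ) ≤ x + g + j * ψ

lemma Gap.mono {ψ g g' : ℝ} {r r' : ℕ} (h : Gap ψ g r) (hg : g ≤ g') (hr : r ≤ r') :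
    Gap ψ g' r' := by
  intro x
  obtain ⟨j, hj, n, h1, h2⟩ := h x
  exact ⟨j, hj.trans hr, n, h1, by linarith⟩

lemma Gap.step {ψ G g e : ℝ} {r Q : ℕ} {P : ℤ} (h : Gap ψ G r)
    (he : |Q * ψ - P| = e) (h1 : G ≤ g + e) (h2 : e ≤ g) : Gap ψ g (r + Q) := by
  intro x
  rcases abs_choice (Q * ψ - P) with hs | hs
  · rw [hs] at he
    obtain ⟨j, hj, n, a1, a2⟩ := h x
    by_cases hc : (n : ℝ) ≤ x + g + j * ψ
    · exact ⟨j, by omega, n, a1, hc⟩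
    · refine ⟨j + Q, by omega, n + P, ?_, ?_⟩ <;> push_cast <;> linarith
  · rw [hs] at he
    obtain ⟨j, hj, n, a1, a2⟩ := h (x + g - G)
    by_cases hc : x + j * ψ < n
    · exact ⟨j, by omega, n, hc, by linarith⟩
    · refine ⟨j + Q, by omega, n + P, ?_, ?_⟩ <;> push_cast <;> linarith

lemma gap_zero (ψ : ℝ) : Gap ψ 1 0 := by
  intro x
  refine ⟨0, le_rfl, ⌊x⌋ + 1, ?_, ?_⟩
  · push_cast; have := Int.lt_floor_add_one x; linarith
  · push_cast; have := Int.floor_le x; linarith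

include h0 h2

lemma conv_abs (k n : ℕ) : ∃ P : ℤ,
    (Sq k n : ℝ) * psi k τ - P = (-τ) ^ n / (2 * k + 1 + 2 * τ) := by
  have hD : (0 : ℝ) < 2 * k + 1 + 2 * τ := by positivity
  suffices H : (∃ P : ℤ, (Sq k n : ℝ) * psi k τ - P = (-τ) ^ n / (2 * k + 1 + 2 * τ)) ∧
      (∃ P : ℤ, (Sq k (n + 1) : ℝ) * psi k τ - P = (-τ) ^ (n + 1) / (2 * k + 1 + 2 * τ)) from H.1
  induction n with
  | zero =>
    refine ⟨⟨1, ?_⟩, ⟨k + 1, ?_⟩⟩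
    · simp only [Sq, psi]; field_simp; push_cast; ring
    · simp only [Sq, psi]; field_simp; push_cast; ring
  | succ n ih =>
    obtain ⟨⟨P, hP⟩, ⟨P', hP'⟩⟩ := ih
    refine ⟨⟨P', hP'⟩, ⟨P' + P, ?_⟩⟩
    rw [Sq_add_two]
    push_cast
    have e2 : (-τ) ^ (n + 1 + 1) = (-τ) ^ (n + 1) + (-τ) ^ n := by
      rw [pow_succ, pow_succ]; linear_combination (-τ) ^ n * h2
    rw [e2, add_div, ← hP, ← hP']
    ring

lemma conv_abs' (k n : ℕ) : ∃ P : ℤ,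
    |(Sq k n : ℝ) * psi k τ - P| = τ ^ n / (2 * k + 1 + 2 * τ) := by
  have hD : (0 : ℝ) < 2 * k + 1 + 2 * τ := by positivity
  obtain ⟨P, hP⟩ := conv_abs h0 h2 k n
  refine ⟨P, ?_⟩
  rw [hP, abs_div, abs_pow, abs_neg, abs_of_pos h0, abs_of_pos hD]

lemma gap_K (k : ℕ) (hk : 1 ≤ k) (i : ℕ) (hi : i + 1 ≤ k) :
    Gap (psi k τ) ((k + τ - i) / (2 * k + 1 + 2 * τ)) (2 * i + 2) := by
  have hD : (0 : ℝ) < 2 * k + 1 + 2 * τ := by positivity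
  induction i with
  | zero =>
    have hkR : (1 : ℝ) ≤ k := by exact_mod_cast hk
    have he : |((1 : ℕ) : ℝ) * psi k τ - (1 : ℤ)| = (k + τ) / (2 * k + 1 + 2 * τ) := by
      have : ((1 : ℕ) : ℝ) * psi k τ - (1 : ℤ) = -((k + τ) / (2 * k + 1 + 2 * τ)) := by
        unfold psi; field_simp; push_cast; ring
      rw [this, abs_neg, abs_of_nonneg (by positivity)]
    have g1 := (gap_zero (psi k τ)).step (g := psi k τ) he
      (by unfold psi; rw [← add_div, le_div_iff₀ hD]; linarith)
      (by unfold psi; gcongr; linarith)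
    have g2 := g1.step (g := (k + τ) / (2 * k + 1 + 2 * τ)) he
      (by
        unfold psi
        rw [← add_div]
        exact div_le_div_of_nonneg_right (by linarith) hD.le) le_rfl
    simpa using g2
  | succ i ih =>
    have g := ih (by omega)
    obtain ⟨P, hP⟩ := conv_abs' h0 h2 k 0
    have hkR : ((i : ℝ) + 1 + 1) ≤ k := by exact_mod_cast hi
    have := g.step (g := (k + τ - ((i + 1 : ℕ) : ℝ)) / (2 * k + 1 + 2 * τ)) hP
      (by rw [← add_div]; gcongr; push_cast; linarith)
      (by gcongr; push_cast; rw [pow_zero]; linarith)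
    simpa [Sq, mul_add, add_assoc] using this

lemma gap_tau (k : ℕ) (hk : 1 ≤ k) (n : ℕ) :
    Gap (psi k τ) (τ ^ n / (2 * k + 1 + 2 * τ)) (Sq k (n + 2) - 1) := by
  have hD : (0 : ℝ) < 2 * k + 1 + 2 * τ := by positivity
  obtain ⟨b1, b2⟩ := tau_bounds h0 h2
  induction n with
  | zero =>
    have g := gap_K h0 h2 k hk (k - 1) (by omega)
    obtain ⟨P, hP⟩ := conv_abs' h0 h2 k 0
    have hc : ((k - 1 : ℕ) : ℝ) = k - 1 := by push_cast [hk]; ring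
    have := g.step (g := τ ^ 0 / (2 * k + 1 + 2 * τ)) hP
      (by rw [← add_div, hc]; gcongr; rw [pow_zero]; linarith) le_rfl
    refine this.mono le_rfl ?_
    simp [Sq]; omega
  | succ n ih =>
    obtain ⟨P, hP⟩ := conv_abs' h0 h2 k (n + 1)
    have hp : 0 < τ ^ n := pow_pos h0 n
    have := ih.step (g := τ ^ (n + 1) / (2 * k + 1 + 2 * τ)) hP
      (by rw [← add_div]; gcongr; rw [pow_succ]; nlinarith) le_rfl
    refine this.mono le_rfl ?_
    have h1 := Sq_pos k (n + 2)
    rw [show n + 1 + 2 = n + 1 + 1 + 1 by rfl, Sq_add_two k (n + 1)]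
    simp only [show n + 1 + 1 = n + 2 by rfl]
    omega

lemma gap_main (δ : ℕ) (hδ : 7 ≤ δ) (q t : ℤ) (hq : 0 < q) (r : ℕ) (hr : 2 ≤ r)
    (hqr : q < 2 * r) : Gap (psi (δ / 2) τ) (δ * |q * psi (δ / 2) τ - t|) r := by
  set k := δ / 2 with hkdef
  have hk : 3 ≤ k := by omega
  have hkR : (3 : ℝ) ≤ k := by exact_mod_cast hk
  have hδk : (2 * k : ℝ) ≤ δ := by
    have : 2 * k ≤ δ := by omega
    exact_mod_cast this
  have hδR : (7 : ℝ) ≤ δ := by exact_mod_cast hδ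
  have hD : (0 : ℝ) < 2 * k + 1 + 2 * τ := by positivity
  obtain ⟨b1, b2⟩ := tau_bounds h0 h2
  have t3 : τ ^ 3 = 2 * τ - 1 := by linear_combination (τ - 1) * h2
  have t4 : τ ^ 4 = 2 - 3 * τ := by linear_combination (τ ^ 2 - τ + 2) * h2
  -- reduce to a bound
  have red : ∀ (n : ℕ) (G : ℝ) (r' : ℕ), q < Sq k (n + 1) →
      Gap (psi k τ) (G / (2 * k + 1 + 2 * τ)) r' → r' ≤ r → G ≤ δ * τ ^ n →
      Gap (psi k τ) (δ * |q * psi k τ - t|) r := by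
    intro n G r' hn hG hr' hle
    refine hG.mono ?_ hr'
    have := approx_lb h0 h2 k n q t hq hn
    rw [abs_mul, abs_of_pos hD] at this
    rw [div_le_iff₀ hD]
    nlinarith
  have hex : ∃ n, q < Sq k (n + 1) := ⟨q.toNat, by have := Sq_ge k (by omega) (q.toNat + 1); omega⟩
  classical
  obtain ⟨n, hn, hmin⟩ : ∃ n, q < Sq k (n + 1) ∧ ∀ m < n, ¬ q < Sq k (m + 1) :=
    ⟨Nat.find hex, Nat.find_spec hex, fun m hm => Nat.find_min hex hm⟩
  have S0 : Sq k 0 = 2 := rfl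
  have S1 : Sq k 1 = 2 * k + 1 := rfl
  have S2 : Sq k 2 = 2 * k + 3 := rfl
  have S3 : Sq k 3 = 4 * k + 4 := by rw [Sq_add_two, S1, S2]; ring
  rcases n with _ | _ | _ | _ | n
  · refine red 0 _ _ hn (gap_K h0 h2 k (by omega) 0 (by omega)) (by omega) ?_
    push_cast; rw [pow_zero]; linarith
  · refine red 1 _ _ hn (gap_K h0 h2 k (by omega) 0 (by omega)) (by omega) ?_
    push_cast; rw [pow_one]; nlinarith
  · have := hmin 1 (by omega)
    simp only [S2] at this
    refine red 2 _ _ hn (gap_K h0 h2 k (by omega) (k / 2) (by omega)) (by omega) ?_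
    rw [h2]
    rcases Nat.even_or_odd' k with ⟨l, hl | hl⟩
    · have e : k / 2 = l := by omega
      rw [e]
      have : (k : ℝ) = 2 * l := by exact_mod_cast hl
      nlinarith
    · have e : k / 2 = l := by omega
      rw [e]
      have e2 : (k : ℝ) = 2 * l + 1 := by exact_mod_cast hl
      rcases Nat.lt_or_ge l 2 with hl2 | hl2
      · have : l = 1 := by omega
        subst this
        push_cast at e2 ⊢
        nlinarith
      · have : (2 : ℝ) ≤ l := by exact_mod_cast hl2
        nlinarith
  · have := hmin 2 (by omega)
    simp only [S3] at this
    refine red 3 _ _ hn (gap_tau h0 h2 k (by omega) 0) (by simp only [zero_add, S2]; omega) ?_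
    rw [t3, pow_zero]; nlinarith
  · have := hmin (n + 3) (by omega)
    refine red (n + 4) _ _ hn (gap_tau h0 h2 k (by omega) n) ?_ ?_
    · have e1 := Sq_add_two k (n + 2)
      have e2 := Sq_mono k (by omega) (n + 2)
      simp only [show n + 2 + 2 = n + 4 by rfl, show n + 2 + 1 = n + 3 by rfl,
        show n + 3 + 1 = n + 4 by rfl] at e1 e2 this
      omega
    · have hp : 0 < τ ^ n := pow_pos h0 n
      rw [pow_add, t4]
      have : 1 ≤ δ * (2 - 3 * τ) := by nlinarith
      nlinarith

end Arith
section Colour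

lemma countBefore_add (u : ℕ → Bool) (n : ℕ) :
    countBefore u false n + countBefore u true n = n := by
  induction n with
  | zero => simp [countBefore_zero]
  | succ n ih =>
    rw [countBefore_succ, countBefore_succ]
    cases u n <;> simp <;> omega

lemma cF_eq (u : ℕ → Bool) (n : ℕ) : (countBefore u false n : ℤ) = n - cT u n := by
  have := countBefore_add u n
  unfold cT
  omega

lemma colour_true (δ : ℕ) (u : ℕ → Bool) (n : ℕ) (h : u n = true) :
    colourCyc δ u n = Sum.inr ((countBefore u true n : ℕ) : ZMod δ) := by
  simp [colourCyc, colour, cyc, h]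

lemma colour_false (δ : ℕ) (u : ℕ → Bool) (n : ℕ) (h : u n = false) :
    colourCyc δ u n = Sum.inl ((countBefore u false n : ℕ) : ZMod δ) := by
  simp [colourCyc, colour, cyc, h]

lemma colour_eq (δ : ℕ) (u : ℕ → Bool) (m n : ℕ) (h : colourCyc δ u m = colourCyc δ u n) :
    u m = u n ∧ (u m = true → (δ : ℤ) ∣ cT u n - cT u m) ∧
      (u m = false → (δ : ℤ) ∣ (n - m : ℤ) - (cT u n - cT u m)) := by
  cases hm : u m <;> cases hn : u n
  · rw [colour_false δ u m hm, colour_false δ u n hn] at h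
    refine ⟨rfl, by simp, fun _ => ?_⟩
    have h1 := Sum.inl.inj h
    rw [ZMod.natCast_eq_natCast_iff, Nat.modEq_iff_dvd, cF_eq, cF_eq] at h1
    convert h1 using 1
    ring
  · rw [colour_false δ u m hm, colour_true δ u n hn] at h
    simp at h
  · rw [colour_true δ u m hm, colour_false δ u n hn] at h
    simp at h
  · rw [colour_true δ u m hm, colour_true δ u n hn] at h
    refine ⟨rfl, fun _ => ?_, by simp⟩
    have h1 := Sum.inr.inj h
    rw [ZMod.natCast_eq_natCast_iff, Nat.modEq_iff_dvd] at h1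
    exact h1

/-- Number of `m < N` with `m ≡ c`. -/
def resCount (δ : ℕ) (c : ZMod δ) (N : ℕ) : ℕ := Nat.count (fun m => (m : ZMod δ) = c) N

lemma resCount_eq (δ : ℕ) (hδ : 0 < δ) (c : ZMod δ) :
    ∃ s : ℕ, ∀ N, resCount δ c N = (N + s) / δ := by
  have : NeZero δ := ⟨hδ.ne'⟩
  have hc : c.val < δ := ZMod.val_lt c
  refine ⟨δ - 1 - c.val, ?_⟩
  intro N
  have e : resCount δ c N = Nat.count (fun m => m ≡ c.val [MOD δ]) N := by
    unfold resCount
    congr 1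
    funext m
    rw [← ZMod.natCast_eq_natCast_iff, ZMod.natCast_zmod_val]
  rw [e, Nat.count_modEq_card _ hδ, Nat.mod_eq_of_lt hc]
  have h1 := Nat.div_add_mod N δ
  have h2 := Nat.mod_lt N hδ
  set a := N / δ
  set b := N % δ
  rw [← h1, show δ * a + b + (δ - 1 - c.val) = (b + (δ - 1 - c.val)) + δ * a by ring,
    Nat.add_mul_div_left _ _ hδ, add_comm]
  congr 1
  split_ifs with h
  · symm
    rw [Nat.div_eq_iff hδ]; omega
  · symm
    apply Nat.div_eq_of_lt; omega

/-- Letter count in a list (with the instance used in `Balanced`). -/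
def lcnt {γ : Type*} [DecidableEq γ] (a : γ) (l : List γ) : ℕ := l.count a

lemma lcnt_snoc {γ : Type*} [DecidableEq γ] (a : γ) (l : List γ) (b : γ) :
    lcnt a (l ++ [b]) = lcnt a l + if b = a then 1 else 0 := by
  unfold lcnt
  rw [List.count_append, List.count_singleton]
  simp

lemma count_window (δ : ℕ) (u : ℕ → Bool) (c : ZMod δ) (i n : ℕ) :
    lcnt (Sum.inl c) (factorAt (colourCyc δ u) i n) + resCount δ c (countBefore u false i) =
      resCount δ c (countBefore u false (i + n)) ∧
    lcnt (Sum.inr c) (factorAt (colourCyc δ u) i n) + resCount δ c (countBefore u true i) =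
      resCount δ c (countBefore u true (i + n)) := by
  induction n with
  | zero => simp [factorAt, lcnt]
  | succ n ih =>
    obtain ⟨h1, h2⟩ := ih
    rw [factorAt_succ, lcnt_snoc, lcnt_snoc, ← add_assoc i n 1,
      countBefore_succ, countBefore_succ]
    cases h : u (i + n)
    · rw [colour_false δ u _ h]
      simp only [if_true, Bool.false_eq_true, if_false, add_zero]
      constructor
      · have : resCount δ c (countBefore u false (i + n) + 1) =
          resCount δ c (countBefore u false (i + n)) +
            if ((countBefore u false (i + n) : ℕ) : ZMod δ) = c then 1 else 0 := by
          unfold resCount; rw [Nat.count_succ]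
        rw [this, ← h1]
        simp only [Sum.inl.injEq]
        omega
      · rw [← h2]
        simp
    · rw [colour_true δ u _ h]
      simp only [if_true, Bool.true_eq_false, if_false, add_zero]
      constructor
      · rw [← h1]
        simp
      · have : resCount δ c (countBefore u true (i + n) + 1) =
          resCount δ c (countBefore u true (i + n)) +
            if ((countBefore u true (i + n) : ℕ) : ZMod δ) = c then 1 else 0 := by
          unfold resCount; rw [Nat.count_succ]
        rw [this, ← h2]
        simp only [Sum.inr.injEq]
        omega

lemma res_balance (δ : ℕ) (hδ : 0 < δ) (c : ZMod δ) (X X' Y Y' : ℕ)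
    (h : (X' : ℤ) - X ≤ (Y' : ℤ) - Y + 1) :
    (resCount δ c X' : ℤ) - resCount δ c X ≤ (resCount δ c Y' : ℤ) - resCount δ c Y + 1 := by
  obtain ⟨s, hs⟩ := resCount_eq δ hδ c
  simp only [hs]
  have a1 := Nat.div_mul_le_self (X' + s) δ
  have a2 := Nat.lt_div_mul_add hδ (a := X + s)
  have a3 := Nat.div_mul_le_self (Y + s) δ
  have a4 := Nat.lt_div_mul_add hδ (a := Y' + s)
  generalize (X' + s) / δ = x' at *
  generalize (X + s) / δ = x at *
  generalize (Y' + s) / δ = y' at *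
  generalize (Y + s) / δ = y at *
  zify at a1 a2 a3 a4 hδ
  by_contra hcon
  push Not at hcon
  nlinarith

lemma colour_balanced (δ : ℕ) (hδ : 0 < δ) (u : ℕ → Bool) (hu : Sturmian u) :
    Balanced (colourCyc δ u) := by
  have hb := balanced_of_sturmian u hu
  have key : ∀ a i j n, (lcnt a (factorAt (colourCyc δ u) i n) : ℤ) ≤
      lcnt a (factorAt (colourCyc δ u) j n) + 1 := by
    intro a i j n
    rcases a with c | c
    · have h1 := (count_window δ u c i n).1
      have h2 := (count_window δ u c j n).1
      have h3 := res_balance δ hδ c (countBefore u false i) (countBefore u false (i + n))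
        (countBefore u false j) (countBefore u false (j + n))
        (by rw [cF_eq, cF_eq, cF_eq, cF_eq]; have := hb j i n; push_cast; omega)
      omega
    · have h1 := (count_window δ u c i n).2
      have h2 := (count_window δ u c j n).2
      have h3 := res_balance δ hδ c (countBefore u true i) (countBefore u true (i + n))
        (countBefore u true j) (countBefore u true (j + n)) (hb i j n)
      omega
  rintro a z z' ⟨i, hi⟩ ⟨j, hj⟩ hl
  have k1 := key a i j z.length
  have k2 := key a j i z.length
  rw [hi, hl, hj] at k1
  rw [hi, hl, hj] at k2
  change |(lcnt a z : ℤ) - (lcnt a z' : ℤ)| ≤ 1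
  rw [abs_le]
  constructor <;> omega

lemma freq_eq (u : ℕ → Bool) (n : ℕ) (c : Bool) :
    (factorAt u 0 n).count c = countBefore u c n := by
  induction n with
  | zero => simp [factorAt, countBefore]
  | succ n ih =>
    rw [factorAt_succ, List.count_append, ih, countBefore_succ, List.count_singleton]
    simp

lemma cT_cons (c : Bool) (u : ℕ → Bool) (n : ℕ) :
    cT (consSeq c u) (n + 1) = (if c = true then 1 else 0) + cT u n := by
  induction n with
  | zero => rw [cT_succ]; cases c <;> simp [cT, countBefore, consSeq]
  | succ n ih =>
    have hv : consSeq c u (n + 1) = u n := rfl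
    rw [cT_succ, ih, cT_succ, hv, add_assoc]

lemma cons_bound (u : ℕ → Bool) (c : Bool) (hs : Sturmian (consSeq c u)) (ρ : ℝ)
    (hρ : HasFreq u true ρ) (n : ℕ) :
    |((((if c = true then 1 else 0) + cT u n : ℤ)) : ℝ) - (n + 1) * ρ| ≤ 1 := by
  have hb := balanced_of_sturmian _ hs
  set C : ℤ := (if c = true then 1 else 0) + cT u n with hC
  have hcons : cT (consSeq c u) (n + 1) = C := cT_cons c u n
  have hz : cT (consSeq c u) 0 = 0 := by simp [cT, countBefore]
  have hblock : ∀ i, |cT u (i + (n + 1)) - cT u i - C| ≤ 1 := by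
    intro i
    have h1 := hb (i + 1) 0 (n + 1)
    have h2 := hb 0 (i + 1) (n + 1)
    rw [zero_add, hz, hcons, show i + 1 + (n + 1) = (i + (n + 1)) + 1 by ring,
      cT_cons, cT_cons] at h1 h2
    rw [abs_le]; constructor <;> omega
  have hsum : ∀ L : ℕ, |cT u (L * (n + 1)) - L * C| ≤ L := by
    intro L
    induction L with
    | zero => simp [cT, countBefore]
    | succ L ih =>
      have := hblock (L * (n + 1))
      rw [show (L + 1) * (n + 1) = L * (n + 1) + (n + 1) by ring]
      rw [abs_le] at *
      push_cast
      constructor <;> linarith [this.1, this.2, ih.1, ih.2]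
  have htend : Tendsto (fun L : ℕ => (cT u (L * (n + 1)) : ℝ) / ((L * (n + 1) : ℕ) : ℝ)) atTop
      (nhds ρ) := by
    have ht : Tendsto (fun L : ℕ => L * (n + 1)) atTop atTop :=
      tendsto_id.atTop_mul_const' (by omega)
    have := hρ.comp ht
    refine this.congr ?_
    intro L
    simp only [Function.comp, freq_eq, cT]
    push_cast
    rfl
  have hN : (0 : ℝ) < n + 1 := by positivity
  have hbd : ∀ L : ℕ, 1 ≤ L → ((C - 1 : ℝ) / (n + 1) ≤
      (cT u (L * (n + 1)) : ℝ) / ((L * (n + 1) : ℕ) : ℝ) ∧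
      (cT u (L * (n + 1)) : ℝ) / ((L * (n + 1) : ℕ) : ℝ) ≤ (C + 1 : ℝ) / (n + 1)) := by
    intro L hL
    have hLR : (1 : ℝ) ≤ L := by exact_mod_cast hL
    have h := abs_le.mp (hsum L)
    have h1 : (-(L : ℝ)) ≤ cT u (L * (n + 1)) - L * C := by exact_mod_cast h.1
    have h2 : (cT u (L * (n + 1)) : ℝ) - L * C ≤ L := by exact_mod_cast h.2
    push_cast
    constructor
    · rw [div_le_div_iff₀ hN (by positivity)]; nlinarith
    · rw [div_le_div_iff₀ (by positivity) hN]; nlinarith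
  have l1 : (C - 1 : ℝ) / (n + 1) ≤ ρ := ge_of_tendsto htend
    (eventually_atTop.mpr ⟨1, fun L hL => (hbd L hL).1⟩)
  have l2 : ρ ≤ (C + 1 : ℝ) / (n + 1) := le_of_tendsto htend
    (eventually_atTop.mpr ⟨1, fun L hL => (hbd L hL).2⟩)
  rw [div_le_iff₀ hN] at l1
  rw [le_div_iff₀ hN] at l2
  rw [abs_le]
  constructor <;> linarith

lemma std_count (u : ℕ → Bool) (hu : IsStandard u) (ρ : ℝ) (hρ : HasFreq u true ρ)
    (hirr : ∀ q t : ℤ, 0 < q → (q : ℝ) * ρ ≠ t) (n : ℕ) : cT u n = ⌊((n : ℝ) + 1) * ρ⌋ := by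
  have h1 := abs_le.mp (cons_bound u true hu.2.2 ρ hρ n)
  have h2 := abs_le.mp (cons_bound u false hu.2.1 ρ hρ n)
  have h3 := hirr (n + 1) (cT u n + 1) (by omega)
  push_cast at h1 h2 h3
  simp only [if_true, Bool.false_eq_true, if_false] at h1 h2
  symm
  rw [Int.floor_eq_iff]
  refine ⟨by linarith [h1.2], lt_of_le_of_ne (by linarith [h2.1]) h3⟩

lemma tau_unique (s : ℕ → ℝ) (h : ∀ n, 0 < s n ∧ s n < 1 ∧ 1 / s n = 1 + s (n + 1)) :
    (s 0) ^ 2 = 1 - s 0 := by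
  obtain ⟨τ, h0, h2⟩ : ∃ τ : ℝ, 0 < τ ∧ τ ^ 2 = 1 - τ := by
    refine ⟨(√5 - 1) / 2, ?_, ?_⟩
    · have : (1 : ℝ) < √5 := by rw [Real.lt_sqrt] <;> norm_num
      linarith
    · have : (√5 : ℝ) ^ 2 = 5 := Real.sq_sqrt (by norm_num)
      linarith
  obtain ⟨b1, b2⟩ := tau_bounds h0 h2
  have hd : ∀ n, |s n - τ| ≤ τ * |s (n + 1) - τ| := by
    intro n
    obtain ⟨p0, p1, p2⟩ := h n
    obtain ⟨q0, q1, -⟩ := h (n + 1)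
    have e1 : s n * (1 + s (n + 1)) = 1 := by rw [← p2]; field_simp
    have e2 : (s n - τ) * (1 + s (n + 1)) = τ * -(s (n + 1) - τ) := by
      linear_combination e1 - h2
    have e3 : |s n - τ| * (1 + s (n + 1)) = τ * |s (n + 1) - τ| := by
      rw [← abs_of_pos (show 0 < 1 + s (n + 1) by linarith), ← abs_mul, e2, abs_mul, abs_neg,
        abs_of_pos h0]
    nlinarith [abs_nonneg (s n - τ)]
  have hd2 : ∀ n, |s 0 - τ| ≤ τ ^ n * |s n - τ| := by
    intro n
    induction n with
    | zero => simp
    | succ n ih =>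
      have := hd n
      have hp : 0 < τ ^ n := pow_pos h0 n
      calc |s 0 - τ| ≤ τ ^ n * |s n - τ| := ih
        _ ≤ τ ^ n * (τ * |s (n + 1) - τ|) := by gcongr
        _ = _ := by ring
  have hd3 : ∀ n, |s 0 - τ| ≤ τ ^ n := by
    intro n
    have hp : 0 < τ ^ n := pow_pos h0 n
    have : |s n - τ| ≤ 1 := by
      obtain ⟨p0, p1, -⟩ := h n
      rw [abs_le]; constructor <;> linarith
    nlinarith [hd2 n]
  have hlim : Tendsto (fun n : ℕ => τ ^ n) atTop (nhds 0) :=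
    tendsto_pow_atTop_nhds_zero_of_lt_one h0.le (by linarith)
  have := ge_of_tendsto' hlim hd3
  have : s 0 = τ := by
    have := abs_eq_zero.mp (le_antisymm this (abs_nonneg _))
    linarith
  rw [this, h2]

lemma slope_psi (k : ℕ) (u : ℕ → Bool) (θ : ℝ) (hθ : HasSlope u θ) (a : ℕ → ℕ)
    (hcf : HasCF θ a) (ha1 : a 1 = 1) (ha2 : a 2 = k) (ha : ∀ n, 3 ≤ n → a n = 1) :
    ∃ τ : ℝ, 0 < τ ∧ τ ^ 2 = 1 - τ ∧ HasFreq u true (psi k τ) := by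
  obtain ⟨t, ht0, ht⟩ := hcf
  obtain ⟨ρa, ρb, hfa, hfb, hlt, hθe⟩ := hθ
  have h2 : (t 2) ^ 2 = 1 - t 2 := by
    apply tau_unique (fun n => t (n + 2))
    intro n
    obtain ⟨p0, p1, p2⟩ := ht (n + 2)
    refine ⟨p0, p1, ?_⟩
    rw [p2, ha (n + 2 + 1) (by omega)]
    push_cast
    rfl
  refine ⟨t 2, (ht 2).1, h2, ?_⟩
  have hsum : ρa + ρb = 1 := by
    have h1 := hfa.add hfb
    refine tendsto_nhds_unique h1 ?_
    refine (tendsto_const_nhds (x := (1 : ℝ))).congr' ?_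
    filter_upwards [eventually_ge_atTop 1] with n hn
    have hnR : (0 : ℝ) < n := by exact_mod_cast hn
    rw [freq_eq, freq_eq, ← add_div]
    have := countBefore_add u n
    have e : (countBefore u false n : ℝ) + countBefore u true n = n := by exact_mod_cast this
    rw [e, div_self hnR.ne']
  obtain ⟨p0, -, p2⟩ := ht 0
  obtain ⟨q0, -, q2⟩ := ht 1
  obtain ⟨r0, -, -⟩ := ht 2
  simp only [zero_add, ha1, show 1 + 1 = 2 by rfl, ha2] at p2 q2
  have hkpos : (0 : ℝ) < k + t 2 := by positivity
  have e1 : t 1 * (k + t 2) = 1 := by rw [← q2]; field_simp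
  have e0 : t 0 * (1 + t 1) = 1 := by
    have : ((1 : ℕ) : ℝ) + t 1 = 1 + t 1 := by norm_num
    rw [← this, ← p2]; field_simp
  have hb0 : ρb ≠ 0 := by
    rintro rfl
    rw [div_zero] at hθe
    linarith
  have e3 : t 0 * ρb = ρa := by rw [ht0, hθe]; field_simp
  have hψ : ρb = psi k (t 2) := by
    unfold psi
    rw [eq_div_iff (by positivity)]
    have e4 : t 0 * (k + t 2 + 1) = k + t 2 := by
      linear_combination (k + t 2) * e0 - t 0 * e1
    have e5 : ρb * (1 + t 0) = 1 := by linear_combination hsum + e3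
    linear_combination (k + t 2 + 1) * e5 - ρb * e4
  rw [← hψ]
  exact hfb

end Colour
section Main

lemma isPeriod_nonempty {γ : Type*} (z : List γ) (hz : z ≠ []) : IsPeriod z (minPeriod z) := by
  have : ({p | IsPeriod z p} : Set ℕ).Nonempty := by
    refine ⟨z.length, List.length_pos_of_ne_nil hz, ?_⟩
    intro i hi
    omega
  exact Nat.sInf_mem this

lemma ce_eq {γ : Type*} (x : ℕ → γ) (N : ℕ) (hN : 0 < N)
    (hup : ∀ i p r, 0 < p → 0 < r → (∀ j, j < r → x (i + j) = x (i + j + p)) → r * N ≤ p)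
    (i₀ : ℕ) (hlow : x i₀ = x (i₀ + N)) :
    criticalExponent x = ((N + 1 : ℕ) : ℝ≥0∞) / (N : ℝ≥0∞) := by
  have hN0 : (N : ℝ≥0∞) ≠ 0 := by simpa using hN.ne'
  apply le_antisymm
  · unfold criticalExponent
    refine iSup₂_le ?_
    rintro z ⟨⟨i, hi⟩, hz⟩
    obtain ⟨hp0, hp⟩ := isPeriod_nonempty z hz
    unfold expE
    set p := minPeriod z with hpdef
    have hp0' : (p : ℝ≥0∞) ≠ 0 := by simpa using hp0.ne'
    rw [ENNReal.div_le_iff hp0' (ENNReal.natCast_ne_top p), ← ENNReal.mul_div_right_comm,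
      ENNReal.le_div_iff_mul_le (Or.inl hN0) (Or.inl (ENNReal.natCast_ne_top N))]
    suffices h : z.length * N ≤ (N + 1) * p by exact_mod_cast h
    rcases Nat.lt_or_ge p z.length with hl | hl
    · have hget : ∀ k, k < z.length → z[k]? = some (x (i + k)) := by
        intro k hk
        rw [← hi]
        simp [factorAt, hk]
      have h := hup i p (z.length - p) hp0 (by omega) (by
        intro j hj
        have h1 := hp j (by omega)
        rw [hget j (by omega), hget (j + p) (by omega)] at h1
        have := Option.some.inj h1
        rw [this, add_assoc])
      obtain ⟨r, hr⟩ : ∃ r, z.length = p + r := ⟨z.length - p, by omega⟩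
      rw [hr] at h ⊢
      rw [Nat.add_sub_cancel_left] at h
      nlinarith
    · nlinarith
  · unfold criticalExponent
    have hlen : (factorAt x i₀ (N + 1)).length = N + 1 := factorAt_length _ _ _
    have hne : factorAt x i₀ (N + 1) ≠ [] := by
      intro h; rw [h] at hlen; simp at hlen
    refine le_trans ?_ (le_iSup₂ (factorAt x i₀ (N + 1)) ⟨isFactor_factorAt _ _ _, hne⟩)
    unfold expE
    rw [hlen]
    have hper : IsPeriod (factorAt x i₀ (N + 1)) N := by
      refine ⟨hN, ?_⟩
      intro i hi
      rw [hlen] at hi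
      have : i = 0 := by omega
      subst this
      simp [factorAt, hlow]
    have hle : minPeriod (factorAt x i₀ (N + 1)) ≤ N := Nat.sInf_le hper
    gcongr

lemma upper (δ : ℕ) (hδ : 7 ≤ δ) (u : ℕ → Bool) (τ : ℝ) (h0 : 0 < τ) (h2 : τ ^ 2 = 1 - τ)
    (e : ℝ) (he0 : 0 < e) (he1 : e < 1 / 8) (hψ : psi (δ / 2) τ = (1 + e) / 2)
    (hd1 : δ * e ≤ 1 - 1.23 * e) (hd2 : 1 - 2.24 * e ≤ δ * e)
    (hc : ∀ n : ℕ, cT u n = ⌊((n : ℝ) + 1) * psi (δ / 2) τ⌋)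
    (i p r : ℕ) (hp : 0 < p) (hr : 0 < r)
    (hx : ∀ j, j < r → colourCyc δ u (i + j) = colourCyc δ u (i + j + p)) :
    r * (2 * δ - 2) ≤ p := by
  have hδR : (7 : ℝ) ≤ δ := by exact_mod_cast hδ
  have hlo : ∀ m n : ℕ, (n : ℝ) * psi (δ / 2) τ - 1 < ((cT u (m + n) - cT u m : ℤ) : ℝ) := by
    intro m n
    rw [hc, hc]
    have a1 := Int.lt_floor_add_one (((m + n : ℕ) + 1 : ℝ) * psi (δ / 2) τ)
    have a2 := Int.floor_le (((m : ℕ) + 1 : ℝ) * psi (δ / 2) τ)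
    push_cast at a1 a2 ⊢
    linarith
  have hhi : ∀ m n : ℕ, ((cT u (m + n) - cT u m : ℤ) : ℝ) < (n : ℝ) * psi (δ / 2) τ + 1 := by
    intro m n
    rw [hc, hc]
    have a1 := Int.floor_le (((m + n : ℕ) + 1 : ℝ) * psi (δ / 2) τ)
    have a2 := Int.lt_floor_add_one (((m : ℕ) + 1 : ℝ) * psi (δ / 2) τ)
    push_cast at a1 a2 ⊢
    linarith
  have hu : ∀ j, j < r → u (i + j) = u (i + j + p) := fun j hj => (colour_eq δ u _ _ (hx j hj)).1
  obtain ⟨T, hT⟩ : ∃ T, T = cT u (i + p) - cT u i := ⟨_, rfl⟩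
  have hconst : ∀ j, j ≤ r → cT u (i + j + p) - cT u (i + j) = T := by
    intro j hj
    induction j with
    | zero => simp [hT]
    | succ j ih =>
      have a := ih (by omega)
      have b := hu j (by omega)
      rw [show i + (j + 1) + p = i + j + p + 1 by omega, show i + (j + 1) = i + j + 1 by omega,
        cT_succ, cT_succ, ← b]
      linarith
  by_contra hcon
  push Not at hcon
  have hmono : ∀ m n, cT u m ≤ cT u (m + n) ∧ cT u (m + n) ≤ cT u m + n := by
    intro m n
    induction n with
    | zero => simp
    | succ n ih =>
      rw [← add_assoc, cT_succ]
      push_cast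
      split_ifs <;> omega
  have hTt : (∃ j, j < r ∧ u (i + j) = true) → (δ : ℤ) ∣ T := by
    rintro ⟨j, hj, hj'⟩
    have := (colour_eq δ u _ _ (hx j hj)).2.1 hj'
    rwa [hconst j hj.le] at this
  have hTf : (∃ j, j < r ∧ u (i + j) = false) → (δ : ℤ) ∣ p - T := by
    rintro ⟨j, hj, hj'⟩
    have := (colour_eq δ u _ _ (hx j hj)).2.2 hj'
    rw [hconst j hj.le] at this
    convert this using 1
    push_cast
    ring
  by_cases ht : ∃ j, j < r ∧ u (i + j) = true
  · obtain ⟨t, htT⟩ := hTt ht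
    by_cases hf : ∃ j, j < r ∧ u (i + j) = false
    · -- both letters occur
      obtain ⟨s, hsT⟩ := hTf hf
      obtain ⟨q, hqdef⟩ : ∃ q, q = s + t := ⟨_, rfl⟩
      have hpq : (p : ℤ) = δ * q := by rw [hqdef]; linarith
      have hr2 : 2 ≤ r := by
        obtain ⟨j, hj, hj'⟩ := ht
        obtain ⟨l, hl, hl'⟩ := hf
        by_contra h
        have e1 : j = 0 := by omega
        have e2 : l = 0 := by omega
        subst e1; subst e2
        rw [hj'] at hl'; simp at hl'
      have hδZ : (7 : ℤ) ≤ δ := by exact_mod_cast hδ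
      have hpZ : (0 : ℤ) < p := by exact_mod_cast hp
      have hq0 : 0 < q := by
        by_contra h
        push Not at h
        nlinarith
      have hq2 : q < 2 * r := by
        have h1 : (p : ℤ) < r * (2 * δ - 2) := by
          have : ((2 * δ - 2 : ℕ) : ℤ) = 2 * δ - 2 := by omega
          rw [← this]; exact_mod_cast hcon
        by_contra h
        push Not at h
        have : (0 : ℤ) ≤ r := by positivity
        nlinarith
      have hgap := gap_main h0 h2 δ hδ q t hq0 r hr2 hq2
      have hpR : (p : ℝ) = δ * q := by exact_mod_cast hpq
      have hTR : (T : ℝ) = δ * t := by exact_mod_cast htT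
      have hε : (p : ℝ) * psi (δ / 2) τ - T = δ * (q * psi (δ / 2) τ - t) := by
        rw [hpR, hTR]; ring
      have hkey : ∀ j : ℕ, j ≤ r → ⌊((i : ℝ) + 1 + p) * psi (δ / 2) τ - T + j * psi (δ / 2) τ⌋ =
          ⌊((i : ℝ) + 1) * psi (δ / 2) τ + j * psi (δ / 2) τ⌋ := by
        intro j hj
        have h1 := hconst j hj
        rw [hc, hc] at h1
        have e1 : ((i : ℝ) + 1 + p) * psi (δ / 2) τ - T + j * psi (δ / 2) τ =
          (((i + j + p : ℕ) : ℝ) + 1) * psi (δ / 2) τ - T := by push_cast; ring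
        have e2 : ((i : ℝ) + 1) * psi (δ / 2) τ + j * psi (δ / 2) τ =
          (((i + j : ℕ) : ℝ) + 1) * psi (δ / 2) τ := by push_cast; ring
        rw [e1, e2, Int.floor_sub_intCast]
        linarith
      have hδ0 : (0 : ℝ) ≤ δ := by linarith
      rcases abs_choice (q * psi (δ / 2) τ - t) with hs | hs
      · rw [hs, ← hε] at hgap
        obtain ⟨j, hj, n, n1, n2⟩ := hgap (((i : ℝ) + 1) * psi (δ / 2) τ)
        have k1 := Int.floor_lt.mpr n1
        have k2 : n ≤ ⌊((i : ℝ) + 1 + p) * psi (δ / 2) τ - T + j * psi (δ / 2) τ⌋ :=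
          Int.le_floor.mpr (by linarith)
        rw [hkey j hj] at k2
        omega
      · rw [hs, mul_neg, ← hε] at hgap
        obtain ⟨j, hj, n, n1, n2⟩ := hgap (((i : ℝ) + 1 + p) * psi (δ / 2) τ - T)
        have k1 := Int.floor_lt.mpr n1
        have k2 : n ≤ ⌊((i : ℝ) + 1) * psi (δ / 2) τ + j * psi (δ / 2) τ⌋ :=
          Int.le_floor.mpr (by linarith)
        rw [hkey j hj] at k1
        omega
    · -- only true
      push Not at hf
      have hall : ∀ j, j < r → u (i + j) = true := fun j hj => by
        have := hf j hj
        simpa using this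
      have s1 := cT_succ u i
      have hi0 := hall 0 hr
      rw [Nat.add_zero] at hi0
      rw [if_pos hi0] at s1
      have hT1 : 1 ≤ T := by
        have := (hmono (i + 1) (p - 1)).1
        rw [show i + 1 + (p - 1) = i + p by omega] at this
        omega
      have ht1 : 1 ≤ t := by
        by_contra h
        push Not at h
        have : (7 : ℤ) ≤ δ := by exact_mod_cast hδ
        nlinarith
      have htR : (1 : ℝ) ≤ t := by exact_mod_cast ht1
      have hTR : (T : ℝ) = δ * t := by exact_mod_cast htT
      rcases Nat.lt_or_ge r 2 with hr2 | hr2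
      · have hr1 : r = 1 := by omega
        subst hr1
        have c1 := hconst 1 le_rfl
        have b := hhi i (p + 1)
        have ee : cT u (i + (p + 1)) - cT u i = T + 1 := by
          rw [show i + (p + 1) = i + 1 + p by omega]; omega
        rw [ee, hψ] at b
        have hpR : (p : ℝ) + 1 ≤ 2 * δ - 2 := by
          have : p + 3 ≤ 2 * δ := by omega
          have : (p : ℝ) + 3 ≤ 2 * δ := by exact_mod_cast this
          linarith
        push_cast at b
        nlinarith
      · have hi1 := hall 1 (by omega)
        have s2 := cT_succ u (i + 1)
        rw [if_pos hi1] at s2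
        rcases Nat.lt_or_ge r 3 with hr3 | hr3
        · have hr1 : r = 2 := by omega
          subst hr1
          have c2 := hconst 2 le_rfl
          have b := hhi i (p + 2)
          have ee : cT u (i + (p + 2)) - cT u i = T + 2 := by
            rw [show i + (p + 2) = i + 2 + p by omega]
            rw [show i + 1 + 1 = i + 2 by omega] at s2
            omega
          rw [ee, hψ] at b
          have hpR : (p : ℝ) + 2 ≤ 4 * δ - 3 := by
            have : p + 5 ≤ 4 * δ := by omega
            have : (p : ℝ) + 5 ≤ 4 * δ := by exact_mod_cast this
            linarith
          push_cast at b
          rcases lt_or_ge t 2 with ht2 | ht2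
          · have : t = 1 := by omega
            subst this
            rw [hTR] at b
            push_cast at b
            have hpl : 2 * δ - 1 ≤ p := by
              by_contra h
              have : p + 2 ≤ 2 * δ := by omega
              have : (p : ℝ) + 2 ≤ 2 * δ := by exact_mod_cast this
              nlinarith
            have b2 := hlo (i + 2) (p - 2)
            have ee2 : cT u (i + 2 + (p - 2)) - cT u (i + 2) = T - 2 := by
              rw [show i + 2 + (p - 2) = i + p by omega]
              rw [show i + 1 + 1 = i + 2 by omega] at s2
              omega
            rw [ee2, hψ] at b2
            have hpc : ((p - 2 : ℕ) : ℝ) = p - 2 := by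
              have : 2 ≤ p := by omega
              push_cast [this]; ring
            have hpl' : (2 * δ - 1 : ℝ) ≤ p := by
              have : 2 * δ ≤ p + 1 := by omega
              have : (2 * δ : ℝ) ≤ p + 1 := by exact_mod_cast this
              linarith
            rw [hpc] at b2
            push_cast at b2
            rw [hTR] at b2
            push_cast at b2
            nlinarith
          · have ht2R : (2 : ℝ) ≤ t := by exact_mod_cast ht2
            rw [hTR] at b
            nlinarith
        · have hi2 := hall 2 (by omega)
          have s3 := cT_succ u (i + 2)
          rw [if_pos hi2] at s3
          have b := hhi i 3
          have ee : cT u (i + 3) - cT u i = 3 := by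
            rw [show i + 1 + 1 = i + 2 by omega] at s2
            rw [show i + 2 + 1 = i + 3 by omega] at s3
            omega
          rw [ee, hψ] at b
          push_cast at b
          linarith
  · -- only false
    push Not at ht
    have hall : ∀ j, j < r → u (i + j) = false := fun j hj => by
      have := ht j hj
      simpa using this
    obtain ⟨s, hsT⟩ := hTf ⟨0, hr, hall 0 hr⟩
    have s1 := cT_succ u i
    have hi0 := hall 0 hr
    rw [Nat.add_zero] at hi0
    rw [if_neg (by simp [hi0])] at s1
    have hT1 : 1 ≤ p - T := by
      have := (hmono (i + 1) (p - 1)).2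
      rw [show i + 1 + (p - 1) = i + p by omega] at this
      omega
    have ht1 : 1 ≤ s := by
      by_contra h
      push Not at h
      have : (7 : ℤ) ≤ δ := by exact_mod_cast hδ
      nlinarith
    have htR : (1 : ℝ) ≤ s := by exact_mod_cast ht1
    have hTR : (p : ℝ) - T = δ * s := by exact_mod_cast hsT
    rcases Nat.lt_or_ge r 2 with hr2 | hr2
    · have hr1 : r = 1 := by omega
      subst hr1
      have c1 := hconst 1 le_rfl
      have b := hlo i (p + 1)
      have ee : cT u (i + (p + 1)) - cT u i = T := by
        rw [show i + (p + 1) = i + 1 + p by omega]; omega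
      rw [ee, hψ] at b
      have hpR : (p : ℝ) + 1 ≤ 2 * δ - 2 := by
        have : p + 3 ≤ 2 * δ := by omega
        have : (p : ℝ) + 3 ≤ 2 * δ := by exact_mod_cast this
        linarith
      have hp0 : (0 : ℝ) ≤ p := by positivity
      push_cast at b
      nlinarith
    · have hi1 := hall 1 (by omega)
      have s2 := cT_succ u (i + 1)
      rw [if_neg (by simp [hi1])] at s2
      have b := hlo i 2
      have ee : cT u (i + 2) - cT u i = 0 := by
        rw [show i + 1 + 1 = i + 2 by omega] at s2
        omega
      rw [ee, hψ] at b
      push_cast at b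
      linarith

lemma lower (δ : ℕ) (hδ : 7 ≤ δ) (u : ℕ → Bool) (ψ : ℝ)
    (e : ℝ) (he0 : 0 < e) (he1 : e < 1 / 8) (hψ : ψ = (1 + e) / 2)
    (hd1 : δ * e ≤ 1 - 1.23 * e) (hd2 : 1 - 2.24 * e ≤ δ * e)
    (hc : ∀ n : ℕ, cT u n = ⌊((n : ℝ) + 1) * ψ⌋) :
    colourCyc δ u 6 = colourCyc δ u (6 + (2 * δ - 2)) := by
  have hN : 6 + (2 * δ - 2) = 2 * δ + 4 := by omega
  rw [hN]
  have h6 : cT u 6 = 3 := by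
    rw [hc, Int.floor_eq_iff, hψ]; push_cast; constructor <;> nlinarith
  have h7 : cT u (6 + 1) = 4 := by
    rw [hc, Int.floor_eq_iff, hψ]; push_cast; constructor <;> nlinarith
  have h8 : cT u (2 * δ + 4) = δ + 3 := by
    rw [hc, Int.floor_eq_iff, hψ]; push_cast; constructor <;> nlinarith
  have h9 : cT u (2 * δ + 4 + 1) = δ + 4 := by
    rw [hc, Int.floor_eq_iff, hψ]; push_cast; constructor <;> nlinarith
  have u6 : u 6 = true := by
    by_contra h
    rw [cT_succ, if_neg h] at h7; omega
  have u8 : u (2 * δ + 4) = true := by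
    by_contra h
    rw [cT_succ, if_neg h] at h9; omega
  rw [colour_true δ u _ u6, colour_true δ u _ u8]
  have e1 : countBefore u true 6 = 3 := by unfold cT at h6; omega
  have e2 : countBefore u true (2 * δ + 4) = δ + 3 := by unfold cT at h8; omega
  rw [e1, e2]
  simp

end Main

theorem statement15 (δ : ℕ) (hδ : 7 ≤ δ) (u : ℕ → Bool) (hu : IsStandard u)
    (θ : ℝ) (hθ : HasSlope u θ) (a : ℕ → ℕ) (hcf : HasCF θ a)
    (ha1 : a 1 = 1) (ha2 : a 2 = δ / 2) (ha : ∀ n, 3 ≤ n → a n = 1) :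
    Balanced (colourCyc δ u) ∧
    Nat.card (ZMod δ ⊕ ZMod δ) = 2 * δ ∧
    criticalExponent (colourCyc δ u) =
      ((2 * δ - 1 : ℕ) : ℝ≥0∞) / ((2 * δ - 2 : ℕ) : ℝ≥0∞) := by
  refine ⟨colour_balanced δ (by omega) u hu.1, ?_, ?_⟩
  · have : NeZero δ := ⟨by omega⟩
    rw [Nat.card_sum, Nat.card_zmod]; ring
  · obtain ⟨τ, h0, h2, hf⟩ := slope_psi (δ / 2) u θ hθ a hcf ha1 ha2 ha
    have hc := std_count u hu _ hf (fun q t hq => psi_irr h0 h2 (δ / 2) (by omega) q t hq)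
    obtain ⟨b1, b2⟩ := tau_bounds h0 h2
    set k := δ / 2 with hkdef
    have hk3 : (3 : ℝ) ≤ k := by
      have : 3 ≤ k := by omega
      exact_mod_cast this
    have hk1 : (2 * k : ℝ) ≤ δ := by
      have : 2 * k ≤ δ := by omega
      exact_mod_cast this
    have hk2 : (δ : ℝ) ≤ 2 * k + 1 := by
      have : δ ≤ 2 * k + 1 := by omega
      exact_mod_cast this
    have hD : (0 : ℝ) < 2 * k + 1 + 2 * τ := by positivity
    obtain ⟨e, he⟩ : ∃ e : ℝ, e = 1 / (2 * k + 1 + 2 * τ) := ⟨_, rfl⟩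
    have he0 : 0 < e := by rw [he]; positivity
    have hDe : (2 * k + 1 + 2 * τ) * e = 1 := by rw [he]; field_simp
    have hψ : psi k τ = (1 + e) / 2 := by
      unfold psi; rw [he]; field_simp; ring
    have he1 : e < 1 / 8 := by nlinarith
    have hd1 : δ * e ≤ 1 - 1.23 * e := by nlinarith
    have hd2 : 1 - 2.24 * e ≤ δ * e := by nlinarith
    have := ce_eq (colourCyc δ u) (2 * δ - 2) (by omega)
      (fun i p r hp hr hx => upper δ hδ u τ h0 h2 e he0 he1 hψ hd1 hd2 hc i p r hp hr hx) 6
      (lower δ hδ u _ e he0 he1 hψ hd1 hd2 hc)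
    rw [this, show 2 * δ - 2 + 1 = 2 * δ - 1 by omega]

end BalancedCE
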